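/- arXiv:0812.3359 — 2 statements merged into one kernel-verified Lean document; each statement's English description precedes it below -/
import Mathlib

section
/- Let f be an M-map with f(∅) ≠ 0, and let f^{-1*} be its convolution inverse, given explicitly by f^{-1*}(∅) = 1/f(∅) and f^{-1*}(a) = Σ_{p} |p|!·(−1)^{|p|}·(∏_{c ∈ p} f(c)) / f(∅)^{|p|+1} for nonempty a (sum over set partitions p of a). Then for every nonempty subset a ⊆ Ω, log*(f^{-1*})(a) = − log* f(a). -/
open Finset

/-- The convolution product of M-maps: `(f * g)(a) = ∑_{b ⊆ a} f(b) · g(a \ b)`. -/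
noncomputable def MMap.conv {Ω : Type*} [DecidableEq Ω] (f g : Finset Ω → ℂ) : Finset Ω → ℂ :=
  fun a => ∑ b ∈ a.powerset, f b * g (a \ b)

/-- The cumulant `log* f` on nonempty subsets:
`log* f(a) = ∑_p (|p|−1)!·(−1)^{|p|−1}·(∏_{c ∈ p} f(c))/f(∅)^{|p|}`,
summed over all set partitions `p` of `a`, `|p|` being the number of blocks. -/
noncomputable def MMap.logStar {Ω : Type*} [DecidableEq Ω] (f : Finset Ω → ℂ) :
    Finset Ω → ℂ := fun a =>
  ∑ p : Finpartition a,
    (Nat.factorial (p.parts.card - 1) : ℂ) * (-1 : ℂ) ^ (p.parts.card - 1) *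
      (∏ c ∈ p.parts, f c) / (f ∅) ^ p.parts.card

/-- The explicit convolution inverse `f^{-1*}`: `f^{-1*}(∅) = 1/f(∅)` and, for
nonempty `a`, `f^{-1*}(a) = ∑_p |p|!·(−1)^{|p|}·(∏_{c ∈ p} f(c))/f(∅)^{|p|+1}`,
summed over all set partitions `p` of `a`. -/
noncomputable def MMap.invStar {Ω : Type*} [DecidableEq Ω] (f : Finset Ω → ℂ) :
    Finset Ω → ℂ := fun a =>
  if a = ∅ then 1 / f ∅ else
    ∑ p : Finpartition a,
      (Nat.factorial p.parts.card : ℂ) * (-1 : ℂ) ^ p.parts.card * (∏ c ∈ p.parts, f c) /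
        (f ∅) ^ (p.parts.card + 1)

theorem MMap.key {Ω : Type*} [DecidableEq Ω] (g : Finset Ω → ℂ) (w : ℕ → ℂ)
    (P : Finset Ω → Prop) [DecidablePred P] (a : Finset Ω) :
    ∑ b ∈ a.powerset with (b ≠ ∅ ∧ P b), g b *
        ∑ q : Finpartition (a \ b), w (q.parts.card + 1) * ∏ c ∈ q.parts, g c =
      ∑ p : Finpartition a, ((p.parts.filter P).card : ℂ) *
        (w p.parts.card * ∏ c ∈ p.parts, g c) := by
  have hR : ∀ p : Finpartition a, ((p.parts.filter P).card : ℂ) *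
        (w p.parts.card * ∏ c ∈ p.parts, g c) =
        ∑ b ∈ p.parts.filter P, (w p.parts.card * ∏ c ∈ p.parts, g c) := by
    intro p; simp
  simp_rw [hR, Finset.mul_sum]
  rw [Finset.sum_sigma', Finset.sum_sigma']
  have hnot : ∀ (b : Finset Ω), b ≠ ∅ → ∀ q : Finpartition (a \ b), b ∉ q.parts := by
    intro b hb q hq
    obtain ⟨y, hy⟩ := Finset.nonempty_iff_ne_empty.mpr hb
    have := q.le hq hy
    simp [hy] at this
  refine Finset.sum_bij (fun s hs => ⟨s.2.extend (b := s.1) (c := a)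
      (by simp at hs; simpa using hs.2.1) Finset.sdiff_disjoint
      (by simp at hs; simpa using hs.1), s.1⟩) ?_ ?_ ?_ ?_
  · rintro ⟨b, q⟩ hs
    simp at hs ⊢
    exact hs.2.2
  · rintro ⟨b, q⟩ hs ⟨b', q'⟩ hs' h
    simp only [Sigma.mk.injEq, heq_eq_eq] at h
    obtain ⟨h1, rfl⟩ := h
    simp at hs
    have h2 := congrArg Finpartition.parts h1
    simp only [Finpartition.extend_parts] at h2
    have h3 := congrArg (fun t => t.erase b) h2
    simp only [Finset.erase_insert (hnot b hs.2.1 _)] at h3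
    have : q = q' := Finpartition.ext h3
    rw [this]
  · rintro ⟨p, b⟩ hp
    simp at hp
    have hb0 : b ≠ ∅ := by simpa using p.ne_bot hp.1
    refine ⟨⟨b, p.ofSubset (parts := p.parts.erase b) (Finset.erase_subset _ _) ?_⟩, ?_, ?_⟩
    · ext y
      simp only [Finset.mem_sup, Finset.mem_erase, id, Finset.mem_sdiff]
      constructor
      · rintro ⟨c, ⟨hc, hcp⟩, hy⟩
        refine ⟨p.le hcp hy, fun hyb => hc (p.eq_of_mem_parts hcp hp.1 hy hyb)⟩
      · rintro ⟨hy, hyb⟩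
        obtain ⟨c, hc, hyc⟩ := p.exists_mem hy
        exact ⟨c, ⟨fun h => hyb (h ▸ hyc), hc⟩, hyc⟩
    · simp
      exact ⟨p.le hp.1, hb0, hp.2⟩
    · simp only [Sigma.mk.injEq, heq_eq_eq, and_true]
      apply Finpartition.ext
      simp [Finpartition.extend_parts, Finpartition.ofSubset, Finset.insert_erase hp.1]
  · rintro ⟨b, q⟩ hs
    simp at hs
    have := hnot b hs.2.1 q
    simp only [Finpartition.extend_parts, Finset.card_insert_of_notMem this,
      Finset.prod_insert this]
    ring

theorem MMap.invStar_eq {Ω : Type*} [DecidableEq Ω] (f : Finset Ω → ℂ) (a : Finset Ω) :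
    MMap.invStar f a = ∑ p : Finpartition a,
      ((Nat.factorial p.parts.card : ℂ) * (-1 : ℂ) ^ p.parts.card /
        (f ∅) ^ (p.parts.card + 1)) * ∏ c ∈ p.parts, f c := by
  unfold MMap.invStar
  split_ifs with h
  · subst h
    have h0 : ∀ p : Finpartition (∅ : Finset Ω), p.parts = ∅ := fun p =>
      Finpartition.parts_eq_empty_iff.mpr rfl
    have hc : Fintype.card (Finpartition (∅ : Finset Ω)) = 1 := by
      rw [Fintype.card_eq_one_iff]
      exact ⟨⊥, fun y => Finpartition.ext (by rw [h0, h0])⟩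
    simp [h0, hc]
  · exact Finset.sum_congr rfl fun p _ => by ring

theorem MMap.logStar_eq {Ω : Type*} [DecidableEq Ω] (f : Finset Ω → ℂ) (a : Finset Ω)
    (x : Ω) (hx : x ∈ a) :
    MMap.logStar f a = ∑ b ∈ a.powerset with x ∈ b, f b * MMap.invStar f (a \ b) := by
  have hk := MMap.key f (fun k => (Nat.factorial (k - 1) : ℂ) * (-1 : ℂ) ^ (k - 1) / (f ∅) ^ k)
    (fun b => x ∈ b) a
  have hS : a.powerset.filter (fun b => b ≠ ∅ ∧ x ∈ b) = a.powerset.filter (fun b => x ∈ b) := by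
    apply Finset.filter_congr
    intro b _
    exact ⟨fun h => h.2, fun h => ⟨Finset.ne_empty_of_mem h, h⟩⟩
  rw [hS] at hk
  simp_rw [MMap.invStar_eq]
  simp only [Nat.add_sub_cancel] at hk
  rw [hk]
  unfold MMap.logStar
  refine Finset.sum_congr rfl fun p _ => ?_
  have : (p.parts.filter (fun b => x ∈ b)).card = 1 := by
    rw [Finset.card_eq_one]
    obtain ⟨c, hc, hxc⟩ := p.exists_mem hx
    refine ⟨c, ?_⟩
    ext d
    simp only [Finset.mem_filter, Finset.mem_singleton]
    exact ⟨fun h => p.eq_of_mem_parts h.1 hc h.2 hxc, fun h => h ▸ ⟨hc, hxc⟩⟩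
  rw [this]
  push_cast
  ring

theorem MMap.powerset_split {Ω : Type*} [DecidableEq Ω] (a : Finset Ω) (F : Finset Ω → ℂ) :
    ∑ b ∈ a.powerset, F b = F ∅ + ∑ b ∈ a.powerset with b ≠ ∅, F b := by
  rw [← Finset.add_sum_erase _ _ (Finset.empty_mem_powerset a)]
  congr 1
  refine Finset.sum_congr ?_ fun _ _ => rfl
  ext b; simp [and_comm]

theorem MMap.conv_inv {Ω : Type*} [DecidableEq Ω] (f : Finset Ω → ℂ) (hf : f ∅ ≠ 0)
    (a : Finset Ω) (ha : a.Nonempty) :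
    ∑ b ∈ a.powerset, f b * MMap.invStar f (a \ b) = 0 := by
  have hk := MMap.key f (fun k => (Nat.factorial (k - 1) : ℂ) * (-1 : ℂ) ^ (k - 1) / (f ∅) ^ k)
    (fun _ => True) a
  simp only [Nat.add_sub_cancel, and_true, Finset.filter_true] at hk
  rw [MMap.powerset_split]
  simp_rw [MMap.invStar_eq]
  rw [hk, Finset.sdiff_empty, Finset.mul_sum, ← Finset.sum_add_distrib]
  refine Finset.sum_eq_zero fun p _ => ?_
  have hp : 0 < p.parts.card := Finset.card_pos.mpr (p.parts_nonempty (by simpa using ha.ne_empty))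
  obtain ⟨k, hk⟩ := Nat.exists_eq_succ_of_ne_zero hp.ne'
  rw [hk]
  simp only [Nat.succ_eq_add_one, Nat.add_sub_cancel, Nat.factorial_succ]
  push_cast
  field_simp
  ring

theorem MMap.conv_swap {Ω : Type*} [DecidableEq Ω] (f g : Finset Ω → ℂ) (a : Finset Ω)
    (P : Finset Ω → Prop) [DecidablePred P] :
    ∑ b ∈ a.powerset with P b, f b * g (a \ b) =
      ∑ b ∈ a.powerset with P (a \ b), g b * f (a \ b) := by
  refine Finset.sum_bij' (fun b _ => a \ b) (fun b _ => a \ b) ?_ ?_ ?_ ?_ ?_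
  · intro b hb
    simp only [Finset.mem_filter, Finset.mem_powerset] at hb ⊢
    exact ⟨Finset.sdiff_subset, by rw [Finset.sdiff_sdiff_eq_self hb.1]; exact hb.2⟩
  · intro b hb
    simp only [Finset.mem_filter, Finset.mem_powerset] at hb ⊢
    exact ⟨Finset.sdiff_subset, hb.2⟩
  · intro b hb
    simp only [Finset.mem_filter, Finset.mem_powerset] at hb
    exact Finset.sdiff_sdiff_eq_self hb.1
  · intro b hb
    simp only [Finset.mem_filter, Finset.mem_powerset] at hb
    exact Finset.sdiff_sdiff_eq_self hb.1
  · intro b hb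
    simp only [Finset.mem_filter, Finset.mem_powerset] at hb
    rw [Finset.sdiff_sdiff_eq_self hb.1, mul_comm]

theorem MMap.inv_inv {Ω : Type*} [DecidableEq Ω] (f : Finset Ω → ℂ) (hf : f ∅ ≠ 0)
    (a : Finset Ω) : MMap.invStar (MMap.invStar f) a = f a := by
  have h0 : MMap.invStar f ∅ = 1 / f ∅ := by simp [MMap.invStar]
  have h0' : MMap.invStar f ∅ ≠ 0 := by rw [h0]; exact one_div_ne_zero hf
  induction a using Finset.strongInduction with
  | H a ih =>
    rcases a.eq_empty_or_nonempty with rfl | ha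
    · rw [MMap.invStar, if_pos rfl, h0, one_div_one_div]
    · have h1 := MMap.conv_inv _ h0' a ha
      have h2 := MMap.conv_inv f hf a ha
      have h3 := MMap.conv_swap f (MMap.invStar f) a (fun _ => True)
      simp only [Finset.filter_true] at h3
      rw [h3] at h2
      rw [MMap.powerset_split] at h1 h2
      have h4 : ∑ b ∈ a.powerset with b ≠ ∅,
          MMap.invStar f b * MMap.invStar (MMap.invStar f) (a \ b) =
          ∑ b ∈ a.powerset with b ≠ ∅, MMap.invStar f b * f (a \ b) := by
        refine Finset.sum_congr rfl fun b hb => ?_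
        simp only [Finset.mem_filter, Finset.mem_powerset] at hb
        rw [ih _ (Finset.sdiff_ssubset hb.1 (Finset.nonempty_iff_ne_empty.mpr hb.2))]
      rw [h4] at h1
      simp only [Finset.sdiff_empty] at h1 h2
      exact mul_left_cancel₀ h0' (by linear_combination h1 - h2)

/-- For an M-map `f` with `f(∅) ≠ 0`, the cumulant of the convolution inverse is
the negative of the cumulant: `log*(f^{-1*})(a) = − log* f(a)` on nonempty `a`. -/
theorem logStar_invStar {Ω : Type*} [DecidableEq Ω] [Fintype Ω]
    (f : Finset Ω → ℂ) (hf : f ∅ ≠ 0) (a : Finset Ω) (ha : a.Nonempty) :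
    MMap.logStar (MMap.invStar f) a = - MMap.logStar f a := by
  obtain ⟨x, hx⟩ := ha
  rw [MMap.logStar_eq _ a x hx, MMap.logStar_eq _ a x hx]
  simp_rw [MMap.inv_inv f hf]
  rw [MMap.conv_swap]
  have h := MMap.conv_inv f hf a ⟨x, hx⟩
  rw [← Finset.sum_filter_add_sum_filter_not _ (fun b => x ∈ b)] at h
  have hS : a.powerset.filter (fun b => x ∈ a \ b) = a.powerset.filter (fun b => ¬ x ∈ b) := by
    apply Finset.filter_congr
    intro b _
    simp [hx]
  rw [hS]
  linear_combination h
end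

section
/- Let h : ℝⁿ → ℝ be infinitely differentiable. For a subset a ⊆ {1,…,n} let ∂_a h(0) denote the mixed partial derivative of h with respect to the coordinates indexed by a, evaluated at 0 (with ∂_∅ h(0) = h(0)). Then for every nonempty a ⊆ {1,…,n}, ∂_a (exp ∘ h)(0) = e^{h(0)} · Σ_{p} ∏_{c ∈ p} ∂_c h(0), the sum running over all set partitions p of a. -/
open Finset

/-- The mixed partial derivative `∂_a h(x)` of `h : ℝⁿ → E` with respect to the
(distinct) coordinates indexed by the finite set `a = {a_1 < ⋯ < a_k}`, defined by
feeding the corresponding standard basis vectors to the `k`-th iterated Fréchet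
derivative.  For smooth `h` this is the usual mixed partial derivative
`∂^k h/∂x_{a_1}⋯∂x_{a_k}(x)` (independent of the order of differentiation), and
`∂_∅ h(x) = h(x)`. -/
noncomputable def mixedPartial {n : ℕ} {E : Type*} [NormedAddCommGroup E]
    [NormedSpace ℝ E] (h : (Fin n → ℝ) → E) (a : Finset (Fin n)) (x : Fin n → ℝ) : E :=
  iteratedFDeriv ℝ a.card h x (fun i => Pi.single (a.orderEmbOfFin rfl i) 1)

section aux
variable {α : Type*} [DecidableEq α]

def fpInsert {a : Finset α} (m : α) (hm : m ∉ a) (p : Finpartition a) (c : Finset α)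
    (hc : c ∈ insert ∅ p.parts) : Finpartition (insert m a) :=
  Finpartition.ofExistsUnique (insert (insert m c) (p.parts.erase c))
    (by
      have hs : ∀ t ∈ p.parts, t ⊆ a := fun t ht => p.le ht
      have hca : c ⊆ a := by
        rcases Finset.mem_insert.1 hc with rfl | h
        · simp
        · exact hs _ h
      intro t ht
      rcases Finset.mem_insert.1 ht with rfl | h
      · exact Finset.insert_subset_insert _ hca
      · exact (hs _ (Finset.mem_of_mem_erase h)).trans (Finset.subset_insert _ _))
    (by
      have hs : ∀ t ∈ p.parts, t ⊆ a := fun t ht => p.le ht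
      intro x hx
      rcases Finset.mem_insert.1 hx with rfl | h
      · refine ⟨insert x c, by simp, ?_⟩
        rintro t ⟨ht, hxt⟩
        rcases Finset.mem_insert.1 ht with rfl | h
        · rfl
        · exact absurd (hs _ (Finset.mem_of_mem_erase h) hxt) hm
      · have hxm : x ≠ m := fun e => hm (e ▸ h)
        obtain ⟨t, ⟨ht, hxt⟩, hu⟩ := p.existsUnique_mem h
        have hc' : x ∈ c → c = t := by
          intro hxc
          rcases Finset.mem_insert.1 hc with rfl | h
          · simp at hxc
          · exact hu _ ⟨h, hxc⟩
        by_cases hct : c = t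
        · subst hct
          refine ⟨insert m c, by simp [hxt], ?_⟩
          rintro s ⟨hs, hxs⟩
          rcases Finset.mem_insert.1 hs with rfl | h
          · rfl
          · exact absurd (hu s ⟨Finset.mem_of_mem_erase h, hxs⟩) (Finset.ne_of_mem_erase h)
        · refine ⟨t, ⟨by simp [ht, Ne.symm hct], hxt⟩, ?_⟩
          rintro s ⟨hs, hxs⟩
          rcases Finset.mem_insert.1 hs with rfl | h
          · rcases Finset.mem_insert.1 hxs with h | h
            · exact absurd h hxm
            · exact absurd (hc' h) hct
          · exact hu s ⟨Finset.mem_of_mem_erase h, hxs⟩)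
    (by
      intro h
      rcases Finset.mem_insert.1 h with h | h
      · exact (Finset.insert_ne_empty _ _) h.symm
      · exact p.bot_notMem (Finset.mem_of_mem_erase h))

theorem fpInsert_parts {a : Finset α} (m : α) (hm : m ∉ a) (p : Finpartition a) (c : Finset α)
    (hc : c ∈ insert ∅ p.parts) :
    (fpInsert m hm p c hc).parts = insert (insert m c) (p.parts.erase c) := rfl

def fpErase {a : Finset α} (m : α) (hm : m ∉ a) (q : Finpartition (insert m a)) :
    Finpartition a :=
  Finpartition.ofExistsUnique
    ((insert ((q.part m).erase m) (q.parts.erase (q.part m))).erase ∅)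
    (by
      have hB : q.part m ∈ q.parts := q.part_mem.2 (by simp)
      intro t ht x hx
      rcases Finset.mem_insert.1 (Finset.mem_of_mem_erase ht) with rfl | h
      · have h1 := q.le hB (Finset.mem_of_mem_erase hx)
        exact (Finset.mem_insert.1 h1).resolve_left (Finset.ne_of_mem_erase hx)
      · have h1 := q.le (Finset.mem_of_mem_erase h) hx
        refine (Finset.mem_insert.1 h1).resolve_left ?_
        rintro rfl
        exact Finset.ne_of_mem_erase h (q.part_eq_of_mem (Finset.mem_of_mem_erase h) hx).symm)
    (by
      have hB : q.part m ∈ q.parts := q.part_mem.2 (by simp)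
      intro x hx
      have hxm : x ≠ m := fun e => hm (e ▸ hx)
      obtain ⟨t, ⟨ht, hxt⟩, hu⟩ := q.existsUnique_mem (Finset.mem_insert_of_mem (b := m) hx)
      by_cases hct : q.part m = t
      · refine ⟨(q.part m).erase m, ⟨?_, by simp [hxm, hct, hxt]⟩, ?_⟩
        · refine Finset.mem_erase.2 ⟨?_, by simp⟩
          exact Finset.ne_empty_of_mem (a := x) (by simp [hxm, hct, hxt])
        · rintro s ⟨hs, hxs⟩
          rcases Finset.mem_insert.1 (Finset.mem_of_mem_erase hs) with rfl | h
          · rfl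
          · exact absurd (hu s ⟨Finset.mem_of_mem_erase h, hxs⟩)
              (hct ▸ Finset.ne_of_mem_erase h)
      · refine ⟨t, ⟨?_, hxt⟩, ?_⟩
        · refine Finset.mem_erase.2 ⟨Finset.ne_empty_of_mem hxt, ?_⟩
          simp [ht, Ne.symm hct]
        · rintro s ⟨hs, hxs⟩
          rcases Finset.mem_insert.1 (Finset.mem_of_mem_erase hs) with rfl | h
          · exact absurd (hu _ ⟨hB, Finset.mem_of_mem_erase hxs⟩) hct
          · exact hu s ⟨Finset.mem_of_mem_erase h, hxs⟩)
    (by simp)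

theorem fpErase_parts {a : Finset α} (m : α) (hm : m ∉ a) (q : Finpartition (insert m a)) :
    (fpErase m hm q).parts =
      (insert ((q.part m).erase m) (q.parts.erase (q.part m))).erase ∅ := rfl

theorem sum_finpartition_insert {R : Type*} [CommSemiring R] (F : Finset α → R)
    {a : Finset α} (m : α) (hm : m ∉ a) :
    ∑ q : Finpartition (insert m a), ∏ c ∈ q.parts, F c =
      ∑ p : Finpartition a, (F {m} * ∏ c ∈ p.parts, F c +
        ∑ c ∈ p.parts, (∏ d ∈ p.parts.erase c, F d) * F (insert m c)) := by
  have key : ∀ p : Finpartition a, (F {m} * ∏ c ∈ p.parts, F c +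
        ∑ c ∈ p.parts, (∏ d ∈ p.parts.erase c, F d) * F (insert m c)) =
      ∑ c ∈ insert ∅ p.parts, (∏ d ∈ p.parts.erase c, F d) * F (insert m c) := by
    intro p
    have h0 : ∅ ∉ p.parts := p.bot_notMem
    rw [Finset.sum_insert h0, Finset.erase_eq_of_notMem h0, mul_comm]
    simp
  simp_rw [key]
  rw [Finset.sum_sigma']
  symm
  have hnm : ∀ (p : Finpartition a) c, c ∈ insert ∅ p.parts → m ∉ c := by
    intro p c hc hmc
    rcases Finset.mem_insert.1 hc with rfl | h
    · simp at hmc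
    · exact hm (p.le h hmc)
  have hpart : ∀ (p : Finpartition a) c (hc : c ∈ insert ∅ p.parts),
      (fpInsert m hm p c hc).part m = insert m c := fun p c hc =>
    Finpartition.part_eq_of_mem _ (by rw [fpInsert_parts]; simp) (by simp)
  have hni : ∀ (p : Finpartition a) c, insert m c ∉ p.parts := fun p c h =>
    hm (p.le h (by simp))
  refine Finset.sum_bij' (fun x hx => fpInsert m hm x.1 x.2 (Finset.mem_sigma.1 hx).2)
    (fun q _ => ⟨fpErase m hm q, (q.part m).erase m⟩) ?_ ?_ ?_ ?_ ?_
  · simp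
  · intro q _
    simp only [Finset.mem_sigma, Finset.mem_univ, true_and, fpErase_parts]
    by_cases h : (q.part m).erase m = ∅ <;> simp [h]
  · rintro ⟨p, c⟩ hx
    have hc := (Finset.mem_sigma.1 hx).2
    dsimp only at hc ⊢
    have h0 : ∅ ∉ p.parts := p.bot_notMem
    have e2 : ((fpInsert m hm p c hc).part m).erase m = c := by
      rw [hpart, Finset.erase_insert (hnm p c hc)]
    have e1 : fpErase m hm (fpInsert m hm p c hc) = p := by
      ext1
      rw [fpErase_parts, e2, hpart, fpInsert_parts, Finset.erase_insert
        (fun h => hni p c (Finset.mem_of_mem_erase h))]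
      rcases Finset.mem_insert.1 hc with rfl | h
      · rw [Finset.erase_eq_of_notMem h0, Finset.erase_insert h0]
      · rw [Finset.insert_erase h, Finset.erase_eq_of_notMem h0]
    rw [e1, e2]
  · intro q _
    have hB : q.part m ∈ q.parts := q.part_mem.2 (by simp)
    have hmB : m ∈ q.part m := q.mem_part (by simp)
    have h0 : ∅ ∉ q.parts := q.bot_notMem
    have hn : (q.part m).erase m ∉ q.parts := by
      intro h
      obtain ⟨x, hx⟩ := q.nonempty_of_mem_parts h
      have := q.eq_of_mem_parts h hB hx (Finset.mem_of_mem_erase hx)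
      rw [← this] at hmB
      simp at hmB
    ext1
    rw [fpInsert_parts, fpErase_parts, Finset.insert_erase hmB, Finset.erase_right_comm,
      Finset.erase_insert (fun h => hn (Finset.mem_of_mem_erase h)),
      Finset.erase_eq_of_notMem (fun h => h0 (Finset.mem_of_mem_erase h)),
      Finset.insert_erase hB]
  · rintro ⟨p, c⟩ hx
    dsimp only
    rw [fpInsert_parts, Finset.prod_insert
      (fun h => hni p c (Finset.mem_of_mem_erase h)), mul_comm]
end aux

theorem mixedPartial_empty {n : ℕ} (h : (Fin n → ℝ) → ℝ) (x : Fin n → ℝ) :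
    mixedPartial h ∅ x = h x := by
  exact iteratedFDeriv_zero_apply _

theorem mixedPartial_differentiable {n : ℕ} {h : (Fin n → ℝ) → ℝ}
    (hh : ContDiff ℝ (⊤ : ℕ∞) h) (a : Finset (Fin n)) :
    Differentiable ℝ (mixedPartial h a) := by
  intro x
  exact ((hh.differentiable_iteratedFDeriv (m := a.card)
    (by exact_mod_cast WithTop.coe_lt_top _)) x).continuousMultilinear_apply_const _

theorem mixedPartial_eq {n : ℕ} (h : (Fin n → ℝ) → ℝ) (a : Finset (Fin n)) (k : ℕ)
    (hk : a.card = k) (x : Fin n → ℝ) :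
    mixedPartial h a x =
      iteratedFDeriv ℝ k h x (fun i => Pi.single (a.orderEmbOfFin hk i) 1) := by
  subst hk; rfl

theorem mixedPartial_insert {n : ℕ} {h : (Fin n → ℝ) → ℝ}
    (hh : ContDiff ℝ (⊤ : ℕ∞) h) (a : Finset (Fin n)) (m : Fin n) (hm : ∀ x ∈ a, m < x)
    (x : Fin n → ℝ) :
    mixedPartial h (insert m a) x = fderiv ℝ (mixedPartial h a) x (Pi.single m 1) := by
  have hma : m ∉ a := fun h => lt_irrefl _ (hm _ h)
  have hk : (insert m a).card = a.card + 1 := Finset.card_insert_of_notMem hma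
  have he : (Fin.cons m (a.orderEmbOfFin rfl) : Fin (a.card + 1) → Fin n) =
      (insert m a).orderEmbOfFin hk := by
    apply Finset.orderEmbOfFin_unique
    · intro i
      refine Fin.cases ?_ (fun j => ?_) i
      · simp
      · simp
    · rw [Fin.strictMono_cons]
      exact ⟨fun i => hm _ (Finset.orderEmbOfFin_mem _ _ _), OrderEmbedding.strictMono _⟩
  rw [mixedPartial_eq _ _ _ hk, ← he, iteratedFDeriv_succ_apply_left]
  have hd := (hh.differentiable_iteratedFDeriv (m := a.card)
    (by exact_mod_cast WithTop.coe_lt_top _)) x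
  unfold mixedPartial
  rw [fderiv_continuousMultilinear_apply_const_apply hd]
  simp only [Fin.cons_zero]
  congr 1

theorem mixedPartial_exp_aux {n : ℕ} {h : (Fin n → ℝ) → ℝ}
    (hh : ContDiff ℝ (⊤ : ℕ∞) h) (a : Finset (Fin n)) : ∀ x,
    mixedPartial (fun x => Real.exp (h x)) a x =
      Real.exp (h x) * ∑ p : Finpartition a, ∏ c ∈ p.parts, mixedPartial h c x := by
  induction a using Finset.induction_on_min with
  | empty =>
    intro x
    rw [mixedPartial_empty]
    have : ∀ p : Finpartition (∅ : Finset (Fin n)), p.parts = ∅ := fun p =>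
      p.parts_eq_empty_iff.2 rfl
    have hc : Fintype.card (Finpartition (∅ : Finset (Fin n))) = 1 :=
      Fintype.card_eq_one_iff.2 ⟨Finpartition.empty _, fun p => by ext1; rw [this p]; rfl⟩
    simp [this, hc]
  | insert m a hm ih =>
    intro x
    have hma : m ∉ a := fun h => lt_irrefl _ (hm _ h)
    rw [mixedPartial_insert (h := fun x => Real.exp (h x)) (Real.contDiff_exp.comp hh) a m hm, funext ih]
    have h1 : ∀ p ∈ (Finset.univ : Finset (Finpartition a)), HasFDerivAt (fun x => ∏ c ∈ p.parts, mixedPartial h c x) _ x :=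
      fun p _ => HasFDerivAt.finsetProd (fun c _ => (mixedPartial_differentiable hh c x).hasFDerivAt)
    have h2 := (((hh.differentiable (by simp)) x).hasFDerivAt.exp).mul (HasFDerivAt.fun_sum h1)
    have h3 := h2.fderiv
    have e0 : fderiv ℝ h x (Pi.single m 1) = mixedPartial h {m} x := by
      have := mixedPartial_insert hh ∅ m (by simp) x
      rw [funext (mixedPartial_empty h)] at this
      exact this.symm
    have e1 : ∀ p : Finpartition a, ∀ c ∈ p.parts, mixedPartial h (insert m c) x =
        fderiv ℝ (mixedPartial h c) x (Pi.single m 1) := fun p c hc =>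
      mixedPartial_insert hh c m (fun y hy => hm y (p.le hc hy)) x
    rw [sum_finpartition_insert _ m hma]
    erw [h3]
    simp only [ContinuousLinearMap.add_apply, ContinuousLinearMap.smul_apply,
      ContinuousLinearMap.sum_apply, smul_eq_mul, e0, Finset.sum_add_distrib]
    rw [← Finset.mul_sum, mul_add, add_comm]
    congr 1
    · ring
    · congr 1
      refine Finset.sum_congr rfl fun p _ => Finset.sum_congr rfl fun c hc => ?_
      rw [e1 p c hc]

/-- Faà di Bruno for the exponential: if `h : ℝⁿ → ℝ` is smooth, then for every
nonempty `a ⊆ {1,…,n}`,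
`∂_a(exp ∘ h)(0) = e^{h(0)} · ∑_p ∏_{c∈p} ∂_c h(0)`,
summed over all set partitions `p` of `a`. -/
theorem mixedPartial_exp_comp (n : ℕ) (h : (Fin n → ℝ) → ℝ)
    (hh : ContDiff ℝ (⊤ : ℕ∞) h)
    (a : Finset (Fin n)) (ha : a.Nonempty) :
    mixedPartial (fun x => Real.exp (h x)) a 0 =
      Real.exp (h 0) * ∑ p : Finpartition a, ∏ c ∈ p.parts, mixedPartial h c 0 :=
  mixedPartial_exp_aux hh a 0
end
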